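/- arXiv:1205.4799 — 2 statements merged into one kernel-verified Lean document; each statement's English description precedes it below -/
import Mathlib

section
/- Let n ≥ 1, p ≥ 1, σ ∈ (0,1/2), and let f : ℝ^n → ℝ be locally p-integrable. For x ∈ ℝ^n and r > 0 set r_i := σ^i r/2 and B_i := B_{r_i}(x) for integers i ≥ 0. Then Σ_{i=0}^∞ r_i ( ⨍_{B_i} |f(y)|^p dy )^{1/p} ≤ [ (log 2)^{-1} 2^{-n/p} + (-log σ)^{-1} σ^{-n/p} ] · Ĩ_p^f(x,r), where both sides are interpreted in [0,∞]. -/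
/-!
Write `a = n / p` and `A ρ = (⨍_{B_ρ} |f|^p)^{1/p}`. Since `ρ ↦ ∫_{B_ρ} |f|^p` is monotone and
`|B_ρ|` scales like `ρ^n`, one has `A s ≤ l^a * A ρ` for `s < ρ < l s`; integrating over this
interval gives `s * A s ≤ l^a / (l - 1) * ∫_s^{l s} A` (`mul_average_le`).

Apply this with `s = r_i` and `l = 1/σ` for `i ≥ 1`, and with `s = r/2` and `l = 2` for `i = 0`.
The intervals obtained are disjoint and lie in `(0, r)`, so it suffices that each of the factors
`σ^{-a} / (1/σ - 1)` and `2^a` is at most the constant `C` of the theorem. For the first one this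
is `log l ≤ l - 1`. The second one (`two_rpow_le_const`) uses both summands of `C`: the
term with `2^{-a}` alone is too small, and the term with `σ^{-a}` compensates for it because
`σ < 1/2`.
-/

open MeasureTheory Metric

/-- The bound `2^a ≤ 2^{-a} / log 2 + e^{as} / s` for `s ≥ log 2`, which controls the term `i = 0`;
here `s` stands for `-log σ`. If `a log 2 ≥ 1` the second summand suffices, as `e^{as} / s`
increases in `s ≥ log 2`; otherwise `e^{as} ≥ e a s` and convexity of `2^a` give the bound. -/
lemma two_rpow_le_const {a s : ℝ} (ha : 0 ≤ a) (hs : Real.log 2 ≤ s) :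
    (2:ℝ) ^ a ≤ (Real.log 2)⁻¹ * (2:ℝ) ^ (-a) + s⁻¹ * Real.exp (a * s) := by
  have hL1 := Real.log_two_gt_d9
  have hL2 := Real.log_two_lt_d9
  have he1 := Real.exp_one_gt_d9
  have he2 := Real.exp_one_lt_d9
  rw [Real.rpow_def_of_pos two_pos, Real.rpow_def_of_pos two_pos]
  set L := Real.log 2 with hL
  have hL0 : 0 < L := by linarith
  have hs0 : 0 < s := by linarith
  have hLinv : 1.44 ≤ L⁻¹ := by
    rw [le_inv_comm₀ (by norm_num) hL0]
    norm_num at hL2 ⊢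
    linarith
  rcases le_total 1 (a * L) with h | h
  · have h1 : Real.exp (L * a) * (s / L) ≤ Real.exp (a * s) := by
      have h2 : a * s = L * a + a * (s - L) := by ring
      rw [h2, Real.exp_add]
      gcongr
      have h3 := Real.add_one_le_exp (a * (s - L))
      have h4 : s / L ≤ a * (s - L) + 1 := by
        rw [div_le_iff₀ hL0]
        nlinarith
      linarith
    have h2 : L⁻¹ * Real.exp (L * a) ≤ s⁻¹ * Real.exp (a * s) := by
      calc L⁻¹ * Real.exp (L * a) = s⁻¹ * (Real.exp (L * a) * (s / L)) := by
            field_simp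
        _ ≤ _ := by gcongr
    have h3 : 0 ≤ L⁻¹ * Real.exp (L * -a) := by positivity
    have h4 := Real.exp_pos (L * a)
    nlinarith
  · have h1 : Real.exp (L * a) ≤ 1 + L * a * (Real.exp 1 - 1) := by
      -- chord of the exponential between `0` and `1`
      have hc := convexOn_exp.2 (Set.mem_univ (0:ℝ)) (Set.mem_univ (1:ℝ))
        (show 0 ≤ 1 - L * a by linarith) (show 0 ≤ L * a by positivity) (by ring)
      simp only [smul_eq_mul, mul_zero, zero_add, mul_one, Real.exp_zero] at hc
      linarith
    have h2 : L⁻¹ - a ≤ L⁻¹ * Real.exp (L * -a) := by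
      have h3 := Real.add_one_le_exp (L * -a)
      calc L⁻¹ - a = L⁻¹ * (L * -a + 1) := by field_simp; ring
        _ ≤ _ := by gcongr
    have h3 : Real.exp 1 * a ≤ s⁻¹ * Real.exp (a * s) := by
      have h4 := Real.add_one_le_exp (a * s - 1)
      have h5 : Real.exp (a * s) = Real.exp 1 * Real.exp (a * s - 1) := by
        rw [← Real.exp_add]; congr 1; ring
      rw [h5]
      calc Real.exp 1 * a = s⁻¹ * (Real.exp 1 * (a * s - 1 + 1)) := by field_simp; ring
        _ ≤ _ := by gcongr
    have h6 : L * a * (Real.exp 1 - 1) ≤ a * (Real.exp 1 - 1) := by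
      have : 0 ≤ a * (Real.exp 1 - 1) := mul_nonneg ha (by linarith)
      nlinarith
    linarith

/-- Enlarging a ball by a factor less than `l` decreases averages by a factor at most `l^n`. -/
lemma average_ball_le {n : ℕ} (g : EuclideanSpace ℝ (Fin n) → ENNReal)
    (x : EuclideanSpace ℝ (Fin n)) {s l ρ : ℝ} (hs : 0 < s) (h1 : s < ρ) (h2 : ρ < l * s) :
    ⨍⁻ y in ball x s, g y ∂volume ≤ ENNReal.ofReal (l ^ n) * ⨍⁻ y in ball x ρ, g y ∂volume := by
  have hl : 0 < l := by
    by_contra h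
    nlinarith
  rw [setLAverage_eq, setLAverage_eq]
  have hv : volume (ball x ρ) ≤ ENNReal.ofReal (l ^ n) * volume (ball x s) := by
    refine (measure_mono (ball_subset_ball h2.le)).trans ?_
    rw [Measure.addHaar_ball_mul_of_pos volume x hl s, finrank_euclideanSpace_fin,
      Measure.addHaar_ball_center volume x s]
  have hsub : ∫⁻ y in ball x s, g y ≤ ∫⁻ y in ball x ρ, g y :=
    lintegral_mono_set (ball_subset_ball h1.le)
  have hs0 : volume (ball x s) ≠ 0 := (measure_ball_pos volume x hs).ne'
  have hst : volume (ball x s) ≠ ⊤ := measure_ball_lt_top.ne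
  have hρ0 : volume (ball x ρ) ≠ 0 := (measure_ball_pos volume x (hs.trans h1)).ne'
  have hρt : volume (ball x ρ) ≠ ⊤ := measure_ball_lt_top.ne
  rw [ENNReal.div_le_iff hs0 hst]
  calc ∫⁻ y in ball x s, g y ≤ ∫⁻ y in ball x ρ, g y := hsub
    _ = (∫⁻ y in ball x ρ, g y) / volume (ball x ρ) * volume (ball x ρ) :=
        (ENNReal.div_mul_cancel hρ0 hρt).symm
    _ ≤ (∫⁻ y in ball x ρ, g y) / volume (ball x ρ) *
          (ENNReal.ofReal (l ^ n) * volume (ball x s)) := by gcongr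
    _ = _ := by ring

lemma mul_average_le {n : ℕ} {p : ℝ} (hp : 1 ≤ p) (g : EuclideanSpace ℝ (Fin n) → ENNReal)
    (x : EuclideanSpace ℝ (Fin n)) {s l C : ℝ} (hs : 0 < s) (hl : 1 < l)
    (hC : l ^ ((n:ℝ) / p) ≤ C * (l - 1)) :
    ENNReal.ofReal s * (⨍⁻ y in ball x s, g y ∂volume) ^ (1 / p) ≤
      ENNReal.ofReal C * ∫⁻ ρ in Set.Ioo s (l * s),
        (⨍⁻ y in ball x ρ, g y ∂volume) ^ (1 / p) := by
  have hp0 : 0 < p := by linarith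
  have hl0 : 0 < l := by linarith
  set K := l ^ ((n:ℝ) / p) with hK
  have hK0 : 0 < K := Real.rpow_pos_of_pos hl0 _
  have hC0 : 0 < C := by
    by_contra h
    nlinarith
  have hpt : ∀ ρ ∈ Set.Ioo s (l * s), (⨍⁻ y in ball x s, g y ∂volume) ^ (1 / p) ≤
      ENNReal.ofReal K * (⨍⁻ y in ball x ρ, g y ∂volume) ^ (1 / p) := by
    intro ρ hρ
    have h := ENNReal.rpow_le_rpow (average_ball_le g x hs hρ.1 hρ.2)
      (show 0 ≤ 1 / p by positivity)
    rw [ENNReal.mul_rpow_of_nonneg _ _ (by positivity),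
      ENNReal.ofReal_rpow_of_nonneg (by positivity) (by positivity), ← Real.rpow_natCast,
      ← Real.rpow_mul hl0.le, mul_one_div] at h
    exact h
  have hint : (⨍⁻ y in ball x s, g y ∂volume) ^ (1 / p) * ENNReal.ofReal ((l - 1) * s) ≤
      ENNReal.ofReal K * ∫⁻ ρ in Set.Ioo s (l * s),
        (⨍⁻ y in ball x ρ, g y ∂volume) ^ (1 / p) := by
    rw [← lintegral_const_mul' _ _ ENNReal.ofReal_ne_top]
    refine le_trans (le_of_eq ?_) (setLIntegral_mono' measurableSet_Ioo hpt)
    rw [setLIntegral_const, Real.volume_Ioo]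
    congr 2
    ring
  calc ENNReal.ofReal s * (⨍⁻ y in ball x s, g y ∂volume) ^ (1 / p)
      = ENNReal.ofReal (l - 1)⁻¹ *
        ((⨍⁻ y in ball x s, g y ∂volume) ^ (1 / p) * ENNReal.ofReal ((l - 1) * s)) := by
        have h : s = (l - 1)⁻¹ * ((l - 1) * s) := by
          have : l - 1 ≠ 0 := by linarith
          field_simp
        nth_rw 1 [h]
        rw [ENNReal.ofReal_mul (by simp; linarith)]
        ring
    _ ≤ ENNReal.ofReal (l - 1)⁻¹ * (ENNReal.ofReal K * ∫⁻ ρ in Set.Ioo s (l * s),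
        (⨍⁻ y in ball x ρ, g y ∂volume) ^ (1 / p)) := by gcongr
    _ = ENNReal.ofReal ((l - 1)⁻¹ * K) * ∫⁻ ρ in Set.Ioo s (l * s),
        (⨍⁻ y in ball x ρ, g y ∂volume) ^ (1 / p) := by
        rw [ENNReal.ofReal_mul (by simp; linarith)]
        ring
    _ ≤ _ := by
        gcongr
        rw [inv_mul_le_iff₀ (by linarith)]
        linarith

/-- For `n ≥ 1`, `p ≥ 1`, `σ ∈ (0,1/2)`, `f` locally `p`-integrable, `x ∈ ℝ^n`,
`r > 0`, and the shrinking balls `B_i = B_{σ^i r/2}(x)`, one has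
`Σ_i r_i (⨍_{B_i} |f|^p)^{1/p} ≤ [(log 2)⁻¹ 2^{-n/p} + (-log σ)⁻¹ σ^{-n/p}] Ĩ_p^f(x,r)`,
with both sides interpreted in `[0,∞]`. -/
theorem stmt_1 {n : ℕ} (hn : 1 ≤ n) (p σ : ℝ) (hp : 1 ≤ p) (hσ : σ ∈ Set.Ioo (0:ℝ) (1/2))
    (f : EuclideanSpace ℝ (Fin n) → ℝ)
    (hf : LocallyIntegrable (fun y => |f y| ^ p) volume)
    (x : EuclideanSpace ℝ (Fin n)) (r : ℝ) (hr : 0 < r) :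
    ∑' i : ℕ, ENNReal.ofReal (σ ^ i * (r / 2)) *
        (⨍⁻ y in ball x (σ ^ i * (r / 2)), ENNReal.ofReal (|f y| ^ p) ∂volume) ^ (1 / p)
      ≤ ENNReal.ofReal
          ((Real.log 2)⁻¹ * (2:ℝ) ^ (-(n:ℝ) / p) + (-Real.log σ)⁻¹ * σ ^ (-(n:ℝ) / p)) *
        ∫⁻ ρ in Set.Ioo (0:ℝ) r,
          (⨍⁻ y in ball x ρ, ENNReal.ofReal (|f y| ^ p) ∂volume) ^ (1 / p) := by
  obtain ⟨hσ0, hσ1⟩ := hσ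
  have hp0 : 0 < p := by linarith
  set a : ℝ := (n:ℝ) / p with ha
  have ha0 : 0 ≤ a := by positivity
  have hna : -(n:ℝ) / p = -a := by rw [ha, neg_div]
  rw [hna]
  have hlog : Real.log 2 ≤ -Real.log σ := by
    rw [← Real.log_inv]
    apply Real.log_le_log two_pos
    rw [le_inv_comm₀ two_pos hσ0]
    linarith
  have hL0 : 0 < Real.log 2 := Real.log_pos one_lt_two
  have hexp : σ ^ (-a) = Real.exp (a * -Real.log σ) := by
    rw [Real.rpow_def_of_pos hσ0]; congr 1; ring
  set C : ℝ := (Real.log 2)⁻¹ * (2:ℝ) ^ (-a) + (-Real.log σ)⁻¹ * σ ^ (-a) with hC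
  have hC2 : (2:ℝ) ^ a ≤ C := by
    rw [hC, hexp]
    exact two_rpow_le_const ha0 hlog
  have hCσ : (σ⁻¹) ^ a ≤ C * (σ⁻¹ - 1) := by
    have h1 : (σ⁻¹) ^ a = σ ^ (-a) := by
      rw [Real.rpow_neg hσ0.le, Real.inv_rpow hσ0.le]
    have h2 : -Real.log σ ≤ σ⁻¹ - 1 := by
      rw [← Real.log_inv]
      exact Real.log_le_sub_one_of_pos (inv_pos.2 hσ0)
    have h3 : (-Real.log σ)⁻¹ * σ ^ (-a) ≤ C := by
      have : 0 ≤ (Real.log 2)⁻¹ * (2:ℝ) ^ (-a) := by positivity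
      linarith
    have h4 : 0 < -Real.log σ := by linarith
    have hC0 : 0 < C := lt_of_lt_of_le (by positivity) hC2
    calc (σ⁻¹) ^ a = (-Real.log σ)⁻¹ * σ ^ (-a) * (-Real.log σ) := by
          rw [h1, mul_right_comm, inv_mul_cancel₀ h4.ne', one_mul]
      _ ≤ C * (σ⁻¹ - 1) := by gcongr
  -- the radii `r, r_0, r_1, …`, so that `R (i + 1) = r_i`
  let R : ℕ → ℝ := fun i => Nat.casesOn i r (fun j => σ ^ j * (r / 2))
  have hR1 : ∀ i, R (i + 1) = σ ^ i * (r / 2) := fun _ => rfl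
  have hRpos : ∀ i, 0 < R (i + 1) := fun i => by rw [hR1]; positivity
  have hanti : Antitone R := by
    apply antitone_nat_of_succ_le
    rintro (_ | i)
    · change σ ^ 0 * (r / 2) ≤ r
      simp only [pow_zero, one_mul]; linarith
    · have h := hRpos i
      have h' : R (i + 1 + 1) = σ * R (i + 1) := by rw [hR1, hR1]; ring
      rw [h']
      nlinarith
  have hle : ∀ i, R i ≤ r := fun i => hanti (Nat.zero_le i)
  set A : ℝ → ENNReal := fun ρ =>
    (⨍⁻ y in ball x ρ, ENNReal.ofReal (|f y| ^ p) ∂volume) ^ (1 / p) with hA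
  have hterm : ∀ i : ℕ, ENNReal.ofReal (R (i + 1)) * A (R (i + 1)) ≤
      ENNReal.ofReal C * ∫⁻ ρ in Set.Ioo (R (i + 1)) (R i), A ρ := by
    rintro (_ | i)
    · have h : R 0 = 2 * R (0 + 1) := by
        rw [hR1]; change r = _; ring
      rw [h]
      exact mul_average_le hp _ x (hRpos 0) one_lt_two (by linarith)
    · have h : R (i + 1) = σ⁻¹ * R (i + 1 + 1) := by
        rw [hR1, hR1, pow_succ]; field_simp
      rw [h]
      exact mul_average_le hp _ x (hRpos (i + 1)) ((one_lt_inv₀ hσ0).2 (by linarith)) hCσ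
  calc ∑' i : ℕ, ENNReal.ofReal (R (i + 1)) * A (R (i + 1))
      ≤ ∑' i : ℕ, ENNReal.ofReal C * ∫⁻ ρ in Set.Ioo (R (i + 1)) (R i), A ρ :=
        ENNReal.tsum_le_tsum hterm
    _ = ENNReal.ofReal C * ∫⁻ ρ in ⋃ i, Set.Ioo (R (i + 1)) (R i), A ρ := by
        rw [ENNReal.tsum_mul_left]
        congr 1
        exact (lintegral_iUnion (fun _ => measurableSet_Ioo)
          hanti.pairwise_disjoint_on_Ioo_succ _).symm
    _ ≤ ENNReal.ofReal C * ∫⁻ ρ in Set.Ioo (0:ℝ) r, A ρ := by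
        gcongr
        exact Set.iUnion_subset fun i => Set.Ioo_subset_Ioo (hRpos i).le (hle i)
end

section
/- Let n ≥ 2 and 1 ≤ p < n, and let f be a measurable function on ℝ^n with ∫_0^∞ |{x ∈ ℝ^n : |f(x)| > t}|^{1/n} dt < ∞ (that is, f belongs to the Lorentz space L(n,1)(ℝ^n)). Then sup_{x ∈ ℝ^n} Ĩ_p^f(x,r) → 0 as r → 0⁺. -/
open MeasureTheory Metric
open scoped ENNReal NNReal

/-!
Write `μ(t) = |{|f| > t}|`. A layer-cake estimate (`lintegral_rpow_le_layer`, a Minkowski inequality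
with a non-sharp constant) gives
`(⨍_{B_ρ} |f|^p)^{1/p} ≤ p^{1/p} ∫_0^∞ (|{|f| > t} ∩ B_ρ| / |B_ρ|)^{1/p} dt`.
The integrand is at most `min(1, (s(t)/ρ)^{n/p})`, where `s(t) = (μ(t)/|B_1|)^{1/n}`, and this
bound does not involve the centre of the ball. Integrating in `ρ` and applying Tonelli,
`sup_x Ĩ_p^f(x,r) ≤ p^{1/p} ∫_0^∞ G_r(t) dt` with `G_r(t) = ∫_0^r min(1, (s(t)/ρ)^{n/p}) dρ`.

Here `G_r(t) ≤ r → 0` for every `t`, while `n/p > 1` makes `G_r(t) ≤ C s(t)`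
(`lintegral_min_one_rpow_le`). The Lorentz condition says precisely that `s` is integrable on
`(0, ∞)`, so dominated convergence gives the claim.
-/

/-- Minkowski's inequality for the layer-cake decomposition `g = ∫_0^∞ 1_{g > t} dt`, up to the
factor `p^{1/p}`. With `A = ∫_0^∞ m(t)^{1/p} dt` and `m(t) = ν{g > t}` nonincreasing, one has
`t m(t)^{1/p} ≤ A`, hence `p ∫ t^{p-1} m(t) dt ≤ p A^{p-1} ∫ m(t)^{1/p} dt = p A^p`. -/
lemma lintegral_rpow_le_layer {α : Type*} [MeasurableSpace α] (ν : Measure α) {g : α → ℝ}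
    (hg0 : ∀ x, 0 ≤ g x) (hg : Measurable g) {p : ℝ} (hp : 1 ≤ p) :
    (∫⁻ x, ENNReal.ofReal (g x ^ p) ∂ν) ^ (1 / p) ≤
      ENNReal.ofReal p ^ (1 / p) * ∫⁻ t in Set.Ioi (0:ℝ), ν {x | t < g x} ^ (1 / p) := by
  have hp0 : 0 < p := by linarith
  set A := ∫⁻ t in Set.Ioi (0:ℝ), ν {x | t < g x} ^ (1 / p) with hA
  have hanti : Antitone fun t : ℝ => ν {x | t < g x} ^ (1 / p) := by
    intro s t hst
    exact ENNReal.rpow_le_rpow (measure_mono fun x hx => lt_of_le_of_lt hst hx) (by positivity)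
  have hle : ∀ t ∈ Set.Ioi (0:ℝ), ν {x | t < g x} ^ (1 / p) * ENNReal.ofReal t ≤ A := by
    intro t ht
    calc ν {x | t < g x} ^ (1 / p) * ENNReal.ofReal t
        = ∫⁻ _ in Set.Ioc (0:ℝ) t, ν {x | t < g x} ^ (1 / p) := by simp
      _ ≤ ∫⁻ u in Set.Ioc (0:ℝ) t, ν {x | u < g x} ^ (1 / p) :=
          setLIntegral_mono' measurableSet_Ioc fun u hu => hanti hu.2
      _ ≤ A := lintegral_mono_set Set.Ioc_subset_Ioi_self
  have hpt : ∀ t ∈ Set.Ioi (0:ℝ), ν {x | t < g x} * ENNReal.ofReal (t ^ (p - 1)) ≤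
      ν {x | t < g x} ^ (1 / p) * A ^ (p - 1) := by
    intro t ht
    have ht0 : (0:ℝ) < t := ht
    have h1 : ν {x | t < g x} = ν {x | t < g x} ^ (1 / p) * (ν {x | t < g x} ^ (1 / p)) ^ (p - 1) := by
      rw [← ENNReal.rpow_mul, ← ENNReal.rpow_add_of_nonneg _ _ (by positivity)
        (mul_nonneg (by positivity) (by linarith))]
      rw [show 1 / p + 1 / p * (p - 1) = 1 by field_simp; ring, ENNReal.rpow_one]
    calc ν {x | t < g x} * ENNReal.ofReal (t ^ (p - 1))
        = ν {x | t < g x} ^ (1 / p) *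
            (ν {x | t < g x} ^ (1 / p) * ENNReal.ofReal t) ^ (p - 1) := by
          rw [ENNReal.mul_rpow_of_nonneg _ _ (by linarith), ← mul_assoc, ← h1,
            ENNReal.ofReal_rpow_of_nonneg ht0.le (by linarith)]
      _ ≤ _ := by
          gcongr
          exact hle t ht
  have hmain : ∫⁻ x, ENNReal.ofReal (g x ^ p) ∂ν ≤ ENNReal.ofReal p * A ^ p := by
    rw [lintegral_rpow_eq_lintegral_meas_lt_mul ν (Filter.Eventually.of_forall hg0)
      hg.aemeasurable hp0]
    gcongr
    calc ∫⁻ t in Set.Ioi (0:ℝ), ν {x | t < g x} * ENNReal.ofReal (t ^ (p - 1))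
        ≤ ∫⁻ t in Set.Ioi (0:ℝ), ν {x | t < g x} ^ (1 / p) * A ^ (p - 1) :=
          setLIntegral_mono' measurableSet_Ioi hpt
      _ = A ^ (1:ℝ) * A ^ (p - 1) := by
          rw [lintegral_mul_const _ hanti.measurable, ENNReal.rpow_one]
      _ = A ^ p := by
          rw [← ENNReal.rpow_add_of_nonneg _ _ (by norm_num) (by linarith)]
          congr 1; ring
  calc (∫⁻ x, ENNReal.ofReal (g x ^ p) ∂ν) ^ (1 / p)
      ≤ (ENNReal.ofReal p * A ^ p) ^ (1 / p) := by gcongr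
    _ = _ := by
        rw [ENNReal.mul_rpow_of_nonneg _ _ (by positivity), ← ENNReal.rpow_mul,
          mul_one_div_cancel hp0.ne', ENNReal.rpow_one]

/-- The dominating bound: splitting at `ρ = s`, the integral over `(0, s]` is at most `s` and the
tail is `s / (a - 1)`. -/
lemma lintegral_min_one_rpow_le {a : ℝ} (ha : 1 < a) (s : ℝ≥0∞) :
    ∫⁻ ρ in Set.Ioi (0:ℝ), min 1 ((s / ENNReal.ofReal ρ) ^ a) ≤
      ENNReal.ofReal (1 + 1 / (a - 1)) * s := by
  have ha1 : 0 < a - 1 := by linarith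
  have hC : 0 < 1 + 1 / (a - 1) := by positivity
  rcases eq_or_ne s ⊤ with rfl | hs
  · rw [ENNReal.mul_top (by simpa using hC)]; exact le_top
  rcases eq_or_ne s 0 with rfl | hs0
  · simp [ENNReal.zero_rpow_of_pos (show 0 < a by linarith)]
  obtain ⟨R, hR, rfl⟩ : ∃ R : ℝ, 0 < R ∧ s = ENNReal.ofReal R :=
    ⟨s.toReal, ENNReal.toReal_pos hs0 hs, (ENNReal.ofReal_toReal hs).symm⟩
  rw [← Set.Ioc_union_Ioi_eq_Ioi hR.le]
  refine (lintegral_union_le _ _ _).trans ?_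
  have h1 : ∫⁻ ρ in Set.Ioc 0 R, min 1 ((ENNReal.ofReal R / ENNReal.ofReal ρ) ^ a) ≤
      ENNReal.ofReal R := by
    calc _ ≤ ∫⁻ _ in Set.Ioc 0 R, (1 : ℝ≥0∞) := lintegral_mono fun _ => min_le_left _ _
      _ = _ := by simp
  have h2 : ∫⁻ ρ in Set.Ioi R, min 1 ((ENNReal.ofReal R / ENNReal.ofReal ρ) ^ a) ≤
      ENNReal.ofReal (R / (a - 1)) := by
    calc _ ≤ ∫⁻ ρ in Set.Ioi R, ENNReal.ofReal (R ^ a * ρ ^ (-a)) := by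
          refine setLIntegral_mono' measurableSet_Ioi fun ρ hρ => (min_le_right _ _).trans ?_
          have hρ0 : 0 < ρ := hR.trans hρ
          rw [← ENNReal.ofReal_div_of_pos hρ0,
            ENNReal.ofReal_rpow_of_nonneg (by positivity) (by linarith),
            Real.div_rpow hR.le hρ0.le, Real.rpow_neg hρ0.le, div_eq_mul_inv]
      _ = ENNReal.ofReal (∫ ρ in Set.Ioi R, R ^ a * ρ ^ (-a)) := by
          rw [ofReal_integral_eq_lintegral_ofReal]
          · exact (integrableOn_Ioi_rpow_of_lt (by linarith) hR).const_mul _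
          · filter_upwards [ae_restrict_mem measurableSet_Ioi] with ρ hρ
            have hρ0 : 0 < ρ := hR.trans hρ
            simp only [Pi.zero_apply]
            positivity
      _ = _ := by
          rw [integral_const_mul, integral_Ioi_rpow_of_lt (by linarith) hR, neg_div, ← div_neg,
            ← mul_div_assoc, ← Real.rpow_add hR]
          congr 1
          rw [show a + (-a + 1) = 1 by ring, Real.rpow_one]
          congr 1; ring
  refine (add_le_add h1 h2).trans_eq ?_
  rw [← ENNReal.ofReal_add hR.le (by positivity), ← ENNReal.ofReal_mul hC.le]
  congr 1; ring

/-- The bound on the relative density of a set `S` in a ball, independent of the centre. -/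
lemma density_le {n : ℕ} (hn : 0 < n) (S : Set (EuclideanSpace ℝ (Fin n)))
    (hS : MeasurableSet S) (x : EuclideanSpace ℝ (Fin n)) {ρ : ℝ} (hρ : 0 < ρ) {p : ℝ}
    (hp : 0 < p) :
    (((volume (ball x ρ))⁻¹ • volume.restrict (ball x ρ)) S) ^ (1 / p) ≤
      min 1 (((volume S / volume (ball (0 : EuclideanSpace ℝ (Fin n)) 1)) ^ (1 / (n:ℝ)) /
        ENNReal.ofReal ρ) ^ ((n:ℝ) / p)) := by
  have hn0 : (n:ℝ) ≠ 0 := by positivity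
  have hb0 : volume (ball x ρ) ≠ 0 := (measure_ball_pos _ _ hρ).ne'
  have hbt : volume (ball x ρ) ≠ ⊤ := measure_ball_lt_top.ne
  rw [Measure.smul_apply, Measure.restrict_apply hS, smul_eq_mul]
  apply le_min
  · refine ENNReal.rpow_le_one ?_ (by positivity)
    calc (volume (ball x ρ))⁻¹ * volume (S ∩ ball x ρ)
        ≤ (volume (ball x ρ))⁻¹ * volume (ball x ρ) := by gcongr; exact Set.inter_subset_right
      _ = 1 := ENNReal.inv_mul_cancel hb0 hbt
  · rw [show (n:ℝ) / p = n * (1 / p) by ring, ENNReal.rpow_mul]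
    refine ENNReal.rpow_le_rpow ?_ (by positivity)
    rw [ENNReal.div_rpow_of_nonneg _ _ (by positivity), ← ENNReal.rpow_mul,
      one_div_mul_cancel hn0, ENNReal.rpow_one, ENNReal.ofReal_rpow_of_nonneg hρ.le (by positivity),
      Real.rpow_natCast]
    calc (volume (ball x ρ))⁻¹ * volume (S ∩ ball x ρ)
        ≤ (volume (ball x ρ))⁻¹ * volume S := by gcongr; exact Set.inter_subset_left
      _ = _ := by
        rw [Measure.addHaar_ball_of_pos volume x hρ, finrank_euclideanSpace_fin,
          ENNReal.mul_inv (Or.inr measure_ball_lt_top.ne)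
            (Or.inl ENNReal.ofReal_ne_top), div_eq_mul_inv, div_eq_mul_inv]
        ring

/-- Let `n ≥ 2`, `1 ≤ p < n`, and let `f` be a measurable function on `ℝ^n`
belonging to the Lorentz space `L(n,1)(ℝ^n)`, i.e.
`∫_0^∞ |{x : |f(x)| > t}|^{1/n} dt < ∞`. Then `sup_x Ĩ_p^f(x,r) → 0` as `r → 0⁺`. -/
theorem stmt_13 {n : ℕ} (hn : 2 ≤ n) (p : ℝ) (hp : 1 ≤ p) (hpn : p < n)
    (f : EuclideanSpace ℝ (Fin n) → ℝ) (hf : Measurable f)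
    (hL : ∫⁻ t in Set.Ioi (0:ℝ), (volume {x | t < |f x|}) ^ (1 / (n:ℝ)) ≠ ⊤) :
    Filter.Tendsto
      (fun r : ℝ => ⨆ x : EuclideanSpace ℝ (Fin n),
        ∫⁻ ρ in Set.Ioo (0:ℝ) r,
          (⨍⁻ y in ball x ρ, ENNReal.ofReal (|f y| ^ p) ∂volume) ^ (1 / p))
      (nhdsWithin 0 (Set.Ioi 0)) (nhds 0) := by
  have hp0 : 0 < p := by linarith
  have hnpos : 0 < n := by omega
  have ha : 1 < (n:ℝ) / p := by rwa [one_lt_div hp0]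
  have hfm : Measurable fun x => |f x| := hf.abs
  set ω := volume (ball (0 : EuclideanSpace ℝ (Fin n)) 1) with hω
  have hω0 : ω ≠ 0 := (measure_ball_pos _ _ one_pos).ne'
  set s : ℝ → ℝ≥0∞ := fun t => (volume {x | t < |f x|} / ω) ^ (1 / (n:ℝ)) with hs
  have hanti : Antitone s := by
    intro u v huv
    refine ENNReal.rpow_le_rpow ?_ (by positivity)
    refine ENNReal.div_le_div_right (measure_mono fun x hx => ?_) _
    exact lt_of_le_of_lt huv hx
  have hsm : Measurable s := hanti.measurable
  set K : ℝ → ℝ → ℝ≥0∞ := fun t ρ => min 1 ((s t / ENNReal.ofReal ρ) ^ ((n:ℝ) / p)) with hK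
  have hKm : Measurable (Function.uncurry K) := by
    simp only [hK, Function.uncurry_def]
    fun_prop
  set G : ℝ → ℝ → ℝ≥0∞ := fun r t => ∫⁻ ρ in Set.Ioo (0:ℝ) r, K t ρ with hG
  have hGm : ∀ r, Measurable (G r) := fun r => hKm.lintegral_prod_right'
  have hGr : ∀ r t, G r t ≤ ENNReal.ofReal r := by
    intro r t
    calc G r t ≤ ∫⁻ _ in Set.Ioo (0:ℝ) r, (1 : ℝ≥0∞) := lintegral_mono fun _ => min_le_left _ _
      _ = _ := by simp
  have hGs : ∀ r t, G r t ≤ ENNReal.ofReal (1 + 1 / ((n:ℝ) / p - 1)) * s t := fun r t =>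
    (lintegral_mono_set Set.Ioo_subset_Ioi_self).trans (lintegral_min_one_rpow_le ha (s t))
  have hs_fin : ∫⁻ t in Set.Ioi (0:ℝ), ENNReal.ofReal (1 + 1 / ((n:ℝ) / p - 1)) * s t ≠ ⊤ := by
    rw [lintegral_const_mul _ hsm]
    refine ENNReal.mul_ne_top ENNReal.ofReal_ne_top ?_
    have : ∀ t, s t = volume {x | t < |f x|} ^ (1 / (n:ℝ)) * (ω⁻¹) ^ (1 / (n:ℝ)) := fun t => by
      simp only [hs]
      rw [div_eq_mul_inv (volume _), ENNReal.mul_rpow_of_nonneg _ _ (by positivity)]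
    have hc : (ω⁻¹) ^ (1 / (n:ℝ)) ≠ ⊤ :=
      ENNReal.rpow_ne_top_of_nonneg (by positivity) (ENNReal.inv_ne_top.2 hω0)
    simp_rw [this]
    rw [lintegral_mul_const' _ _ hc]
    exact ENNReal.mul_ne_top hL hc
  have hlim : Filter.Tendsto (fun r => ∫⁻ t in Set.Ioi (0:ℝ), G r t)
      (nhdsWithin 0 (Set.Ioi 0)) (nhds 0) := by
    have hr : Filter.Tendsto (fun r : ℝ => ENNReal.ofReal r)
        (nhdsWithin 0 (Set.Ioi 0)) (nhds 0) := by
      have := (ENNReal.continuous_ofReal.tendsto 0).mono_left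
        (nhdsWithin_le_nhds (s := Set.Ioi (0:ℝ)))
      simpa using this
    have := tendsto_lintegral_filter_of_dominated_convergence
      (μ := volume.restrict (Set.Ioi (0:ℝ))) (l := nhdsWithin (0:ℝ) (Set.Ioi 0))
      (F := G) (f := fun _ => 0) _ (Filter.Eventually.of_forall hGm)
      (Filter.Eventually.of_forall fun r => Filter.Eventually.of_forall (hGs r)) hs_fin
      (Filter.Eventually.of_forall fun t => tendsto_of_tendsto_of_tendsto_of_le_of_le
        tendsto_const_nhds hr (fun _ => zero_le) fun r => hGr r t)
    simpa using this
  have hcp : ENNReal.ofReal p ^ (1 / p) ≠ ⊤ :=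
    ENNReal.rpow_ne_top_of_nonneg (by positivity) ENNReal.ofReal_ne_top
  have hlim' := ENNReal.Tendsto.const_mul hlim (Or.inr hcp)
  rw [mul_zero] at hlim'
  refine tendsto_of_tendsto_of_tendsto_of_le_of_le tendsto_const_nhds hlim'
    (fun _ => zero_le) fun r => iSup_le fun x => ?_
  calc ∫⁻ ρ in Set.Ioo (0:ℝ) r,
          (⨍⁻ y in ball x ρ, ENNReal.ofReal (|f y| ^ p) ∂volume) ^ (1 / p)
      ≤ ∫⁻ ρ in Set.Ioo (0:ℝ) r, ENNReal.ofReal p ^ (1 / p) *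
          ∫⁻ t in Set.Ioi (0:ℝ), K t ρ := by
        refine setLIntegral_mono' measurableSet_Ioo fun ρ hρ => ?_
        rw [setLAverage_eq']
        refine (lintegral_rpow_le_layer _ (fun y => abs_nonneg (f y)) hfm hp).trans ?_
        gcongr with t
        exact density_le hnpos _ (measurableSet_lt measurable_const hfm) x hρ.1 hp0
    _ = ENNReal.ofReal p ^ (1 / p) *
          ∫⁻ ρ in Set.Ioo (0:ℝ) r, ∫⁻ t in Set.Ioi (0:ℝ), K t ρ :=
        lintegral_const_mul' _ _ hcp
    _ = ENNReal.ofReal p ^ (1 / p) * ∫⁻ t in Set.Ioi (0:ℝ), G r t := by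
        rw [lintegral_lintegral_swap (f := fun ρ t => K t ρ) (hKm.comp measurable_swap).aemeasurable]
end
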